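/- Let m be an odd positive integer and m' an even nonnegative integer, and set ρ = (m + m'/2)/2 (so 2ρ is a positive integer). Define c(λ) = 2^{−2λ}·Γ(2λ) / (Γ(λ + m'/4 + 1/2)·Γ(λ + ρ)) for complex λ, and define the polynomial P(x) = [∏_{k=(m+1)/2}^{2ρ−(m+1)/2} (x − ρ + k)] · [∏_{k=1}^{2ρ−1} (x − ρ + k)], where empty products equal 1. Then there exists a nonzero constant c₀ ∈ ℂ such that for every real x ≠ 0, 1/(c(ix)·c(−ix)) = c₀ · x · P(ix) · cot(π(ix − ρ)). -/

import Mathlib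

/-!
With `w = z - ρ`, the two Gamma factors of `1 / c z` pair up with those of `1 / c (-z)` as
`Γ (w + a + n + 1) * Γ (-w - a)`, where `a` and `n` are natural numbers because `m` is odd and `m'`
is even. Reflection turns each pair into `n` linear factors times `± π / sin (π * w)`, and these
linear factors make up `P z`. The remaining factor `1 / (Γ (2 * z) * Γ (-(2 * z)))` is a multiple of
`z * sin (2 * π * z) = ± 2 * z * sin (π * w) * cos (π * w)`, so one of the two sines cancels and a
cotangent is left.
-/

section

open Complex Finset

theorem mem_integerComplement_of_im_ne_zero {z : ℂ} (hz : z.im ≠ 0) : z ∈ integerComplement := by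
  rintro ⟨n, rfl⟩
  exact hz (intCast_im n)

theorem sin_pi_mul_add_natCast (z : ℂ) (n : ℕ) :
    sin (Real.pi * (z + n)) = (-1) ^ n * sin (Real.pi * z) := by
  rw [mul_add, mul_comm _ (n : ℂ), sin_antiperiodic.add_nat_mul_eq]

theorem Gamma_mul_Gamma_neg {z : ℂ} (hz : z ≠ 0) :
    Gamma z * Gamma (-z) = -Real.pi / (z * sin (Real.pi * z)) := by
  have reflection := Gamma_mul_Gamma_one_sub z
  rw [show 1 - z = -z + 1 by ring, Gamma_add_one _ (neg_ne_zero.mpr hz)] at reflection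
  rw [mul_comm z, ← div_div, neg_div, ← reflection]
  field_simp

theorem ascPochhammer_eval_add_natCast_add_one {R : Type*} [CommSemiring R] (x : R) (a n : ℕ) :
    (ascPochhammer R n).eval (x + a + 1) = ∏ k ∈ Icc (a + 1) (a + n), (x + k) := by
  induction n with
  | zero => simp
  | succ n ih =>
    rw [ascPochhammer_succ_eval, ih, ← add_assoc a, prod_Icc_succ_top (by lia)]
    push_cast
    ring

theorem Gamma_add_natCast_mul_Gamma_one_sub {z : ℂ} (hz : ∀ k : ℕ, z ≠ -k) (n : ℕ) :
    Gamma (z + n) * Gamma (1 - z) =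
      (ascPochhammer ℂ n).eval z * (Real.pi / sin (Real.pi * z)) := by
  rw [← Gamma_add_nat_div_Gamma_eq z hz, ← Gamma_mul_Gamma_one_sub]
  field_simp [Gamma_ne_zero hz]

theorem Gamma_mul_Gamma_eq_prod_Icc {w : ℂ} (hw : w ∈ integerComplement) (a n : ℕ) :
    Gamma (w + a + n + 1) * Gamma (-w - a) =
      (∏ k ∈ Icc (a + 1) (a + n), (w + k)) *
        ((-1) ^ (a + 1) * Real.pi / sin (Real.pi * w)) := by
  have not_pole (k : ℕ) : w + a + 1 ≠ -k := fun h ↦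
    integerComplement_add_ne_zero hw (a + 1 + k) (by push_cast; linear_combination h)
  have reflection := Gamma_add_natCast_mul_Gamma_one_sub not_pole n
  have sin_shift : sin (Real.pi * (w + a + 1)) = (-1) ^ (a + 1) * sin (Real.pi * w) := by
    rw [add_assoc]
    exact_mod_cast sin_pi_mul_add_natCast w (a + 1)
  rw [ascPochhammer_eval_add_natCast_add_one, sin_shift] at reflection
  rw [show w + a + n + 1 = w + a + 1 + n by ring, show -w - a = 1 - (w + a + 1) by ring,
    reflection]
  rcases neg_one_pow_eq_or ℂ (a + 1) with sign | sign <;> rw [sign] <;> ring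

/-- Half the sum `ρ` of the positive roots of a rank one space, counted with multiplicity, when the
roots `α` and `α / 2` have multiplicities `m` and `m'` and `α` is identified with `1`. -/
noncomputable def rankOneRho (m m' : ℕ) : ℝ :=
  ((m : ℝ) + (m' : ℝ) / 2) / 2

/-- The Harish-Chandra `c`-function of a rank one space with root multiplicities `m` and `m'`, up to
normalisation. At a pole of `Gamma (2 * z)` it takes the junk value `0`. -/
noncomputable def harishChandraC (m m' : ℕ) (z : ℂ) : ℂ :=
  (2 : ℂ) ^ (-(2 * z)) * Gamma (2 * z) /
    (Gamma (z + (m' : ℂ) / 4 + 1 / 2) * Gamma (z + (rankOneRho m m' : ℂ)))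

/-- The polynomial factor `P` of the Plancherel density, as a function on `ℂ`. The upper limits
are `2 * ρ - (m + 1) / 2` and `2 * ρ - 1`, with `2 * ρ` written as the natural number
`m + m' / 2`, which is correct for even `m'`. -/
noncomputable def plancherelPolynomial (m m' : ℕ) (z : ℂ) : ℂ :=
  (∏ k ∈ Icc ((m + 1) / 2) (m + m' / 2 - (m + 1) / 2), (z - (rankOneRho m m' : ℂ) + (k : ℂ))) *
    ∏ k ∈ Icc 1 (m + m' / 2 - 1), (z - (rankOneRho m m' : ℂ) + (k : ℂ))

variable {m m' : ℕ}

theorem two_mul_rankOneRho (m : ℕ) (hm' : Even m') :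
    2 * (rankOneRho m m' : ℂ) = (m + m' / 2 : ℕ) := by
  obtain ⟨q, rfl⟩ := hm'.two_dvd
  rw [rankOneRho, Nat.mul_div_cancel_left q two_pos]
  push_cast
  ring

theorem sub_rankOneRho_mem_integerComplement (m : ℕ) (hm' : Even m')
    {z : ℂ} (hz : 2 * z ∈ integerComplement) : z - rankOneRho m m' ∈ integerComplement := by
  rintro ⟨n, hn⟩
  refine hz ⟨2 * n + (m + m' / 2 : ℕ), ?_⟩
  rw [Int.cast_add, Int.cast_mul, hn, Int.cast_natCast, ← two_mul_rankOneRho m hm']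
  push_cast
  ring

theorem sin_pi_mul_two_mul (m : ℕ) (hm' : Even m') (z : ℂ) :
    sin (Real.pi * (2 * z)) = (-1) ^ (m + m' / 2) *
      (2 * sin (Real.pi * (z - rankOneRho m m')) * cos (Real.pi * (z - rankOneRho m m'))) := by
  rw [← sin_two_mul, mul_left_comm 2, ← sin_pi_mul_add_natCast, ← two_mul_rankOneRho m hm']
  ring_nf

theorem one_div_harishChandraC_mul_neg (m m' : ℕ) (z : ℂ) :
    1 / (harishChandraC m m' z * harishChandraC m m' (-z)) =
      (Gamma (z + m' / 4 + 1 / 2) * Gamma (-z + m' / 4 + 1 / 2)) *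
        (Gamma (z + rankOneRho m m') * Gamma (-z + rankOneRho m m')) /
          (Gamma (2 * z) * Gamma (-(2 * z))) := by
  have two_cpow_cancel : (2 : ℂ) ^ (-(2 * z)) * 2 ^ (2 * z) = 1 := by
    rw [← cpow_add _ _ two_ne_zero, neg_add_cancel, cpow_zero]
  rw [harishChandraC, harishChandraC, mul_neg, neg_neg, div_mul_div_comm, one_div_div,
    mul_mul_mul_comm ((2 : ℂ) ^ (-(2 * z))), two_cpow_cancel, one_mul, mul_mul_mul_comm]

theorem Gamma_mul_Gamma_neg_add_quarter_add_half (hm : Odd m) (hm' : Even m') {z : ℂ}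
    (hz : z - rankOneRho m m' ∈ integerComplement) :
    Gamma (z + m' / 4 + 1 / 2) * Gamma (-z + m' / 4 + 1 / 2) =
      (∏ k ∈ Icc ((m + 1) / 2) (m + m' / 2 - (m + 1) / 2), (z - rankOneRho m m' + k)) *
        ((-1) ^ ((m + 1) / 2) * Real.pi / sin (Real.pi * (z - rankOneRho m m'))) := by
  have two_rho := two_mul_rankOneRho m hm'
  obtain ⟨j, rfl⟩ := hm
  obtain ⟨q, rfl⟩ := hm'.two_dvd
  have gamma_pair := Gamma_mul_Gamma_eq_prod_Icc hz j q
  rw [Nat.mul_div_cancel_left q two_pos] at two_rho ⊢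
  push_cast at two_rho ⊢
  rw [show (2 * j + 1 + 1) / 2 = j + 1 by lia, show 2 * j + 1 + q - (j + 1) = j + q by lia,
    ← gamma_pair]
  congr 2
  · linear_combination (1 / 2) * two_rho
  · linear_combination (-1 / 2) * two_rho

theorem Gamma_mul_Gamma_neg_add_rankOneRho (hm' : Even m') (hρ : 0 < m + m' / 2) {z : ℂ}
    (hz : z - rankOneRho m m' ∈ integerComplement) :
    Gamma (z + rankOneRho m m') * Gamma (-z + rankOneRho m m') =
      (∏ k ∈ Icc 1 (m + m' / 2 - 1), (z - rankOneRho m m' + k)) *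
        (-Real.pi / sin (Real.pi * (z - rankOneRho m m'))) := by
  have two_rho := two_mul_rankOneRho m hm'
  obtain ⟨n, hn⟩ := Nat.exists_eq_add_one.mpr hρ
  rw [hn] at two_rho ⊢
  have gamma_pair := Gamma_mul_Gamma_eq_prod_Icc hz 0 n
  simp only [zero_add, pow_one, neg_one_mul, Nat.cast_zero, add_zero, sub_zero] at gamma_pair
  rw [Nat.add_sub_cancel, ← gamma_pair, neg_sub, neg_add_eq_sub]
  push_cast at two_rho
  congr 2
  linear_combination two_rho

theorem Gamma_two_mul_mul_Gamma_neg_two_mul (m : ℕ) (hm' : Even m') {z : ℂ} (hz : z ≠ 0) :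
    Gamma (2 * z) * Gamma (-(2 * z)) =
      (-1) ^ (m + m' / 2 + 1) * Real.pi / (4 * z *
        (sin (Real.pi * (z - rankOneRho m m')) * cos (Real.pi * (z - rankOneRho m m')))) := by
  rw [Gamma_mul_Gamma_neg (mul_ne_zero two_ne_zero hz), sin_pi_mul_two_mul m hm']
  rcases neg_one_pow_eq_or ℂ (m + m' / 2) with sign | sign <;> rw [pow_succ, sign] <;> ring

theorem stmt_7_general (hm : Odd m) (hm' : Even m') {z : ℂ} (hz : 2 * z ∈ integerComplement) :
    1 / (harishChandraC m m' z * harishChandraC m m' (-z)) =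
      (-1) ^ ((m + m') / 2) * 4 * Real.pi * z * plancherelPolynomial m m' z *
        cot (Real.pi * (z - rankOneRho m m')) := by
  have z_ne_zero : z ≠ 0 := right_ne_zero_of_mul (integerComplement.ne_zero hz)
  have hw := sub_rankOneRho_mem_integerComplement m hm' hz
  rw [one_div_harishChandraC_mul_neg, Gamma_mul_Gamma_neg_add_quarter_add_half hm hm' hw,
    Gamma_mul_Gamma_neg_add_rankOneRho hm' (Nat.add_pos_left hm.pos _) hw,
    Gamma_two_mul_mul_Gamma_neg_two_mul m hm' z_ne_zero, plancherelPolynomial, cot_eq_cos_div_sin]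
  have sign : (-1 : ℂ) ^ ((m + 1) / 2) = (-1) ^ ((m + m') / 2) * (-1) ^ (m + m' / 2) := by
    obtain ⟨j, rfl⟩ := hm
    obtain ⟨q, rfl⟩ := hm'.two_dvd
    rw [← pow_add, neg_one_pow_congr]
    grind
  rw [sign]
  field_simp
  ring

end

/-- Rank one Plancherel density, odd multiplicity case. Let `m` be odd positive, `m'` even
nonnegative, `ρ = (m + m'/2)/2`. With `c` the Harish-Chandra `c`-function and `P` the
polynomial `[∏_{k=(m+1)/2}^{2ρ-(m+1)/2} (x - ρ + k)]·[∏_{k=1}^{2ρ-1} (x - ρ + k)]`, there is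
a nonzero constant `c₀` with `1/(c(ix)c(-ix)) = c₀·x·P(ix)·cot(π(ix - ρ))` for all real
`x ≠ 0`. -/
theorem stmt_7 (m m' : ℕ) (hmodd : Odd m) (hmpos : 0 < m) (hm' : Even m') :
    let ρ : ℝ := ((m : ℝ) + (m' : ℝ) / 2) / 2
    let c : ℂ → ℂ := fun lam =>
      (2 : ℂ) ^ (-(2 * lam)) * Complex.Gamma (2 * lam) /
        (Complex.Gamma (lam + (m' : ℂ) / 4 + 1 / 2) * Complex.Gamma (lam + (ρ : ℂ)))
    let P : ℂ → ℂ := fun X =>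
      (∏ k ∈ Finset.Icc ((m + 1) / 2) (m + m' / 2 - (m + 1) / 2), (X - (ρ : ℂ) + (k : ℂ))) *
        ∏ k ∈ Finset.Icc 1 (m + m' / 2 - 1), (X - (ρ : ℂ) + (k : ℂ))
    ∃ c₀ : ℂ, c₀ ≠ 0 ∧ ∀ x : ℝ, x ≠ 0 →
      1 / (c (Complex.I * (x : ℂ)) * c (-(Complex.I * (x : ℂ)))) =
        c₀ * (x : ℂ) * P (Complex.I * (x : ℂ)) *
          (Complex.cos ((Real.pi : ℂ) * (Complex.I * (x : ℂ) - (ρ : ℂ))) /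
            Complex.sin ((Real.pi : ℂ) * (Complex.I * (x : ℂ) - (ρ : ℂ)))) := by
  intro ρ c P
  refine ⟨(-1) ^ ((m + m') / 2) * 4 * Real.pi * Complex.I, by simp [Real.pi_ne_zero],
    fun x hx ↦ ?_⟩
  have hix : 2 * (Complex.I * x) ∈ Complex.integerComplement :=
    mem_integerComplement_of_im_ne_zero (by simpa using hx)
  have density := stmt_7_general hmodd hm' hix
  rwa [← mul_assoc _ Complex.I] at density
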